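/- The total fractional weighted flow-time of algorithm A (summed over all jobs not in J^imm) is at most ∑_{j∉J^imm} α_j + (1/ε)·∑_{j∈J} w_j·p_j. -/

import Mathlib

/-!
Write `x_j(t)` for the remaining size of a released job and `δ_j(t)` for the indicator that `j` is
processed in slot `t`. For `r_{j'} ≤ r_j` the product `x_j x_{j'}` jumps to `p_j · p_{j'}(r_j)` when
`j` arrives and then decreases by `δ_j x_{j'} + δ_{j'} x_j - δ_j δ_{j'}` in each slot until it
vanishes (`sum_drop`). Weighting each pair by `min ρ_j ρ_{j'}` and summing over pairs of jobs that
are not immediately rejected, with the diagonal halved, the initial jumps assemble to `∑ α_j`, hence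

  `∑_j α_j = ∑_t ∑_j δ_j(t) (∑_{j'} min ρ_j ρ_{j'} x_{j'}(t) - ρ_j / 2)`  (`sum_alpha_eq`).

The fractional flow time is `∑_t ∑_{j'} ρ_{j'} x_{j'}(t)`, so it suffices to bound, in each slot
processing `i`, the discrepancy `∑_{j'} (ρ_{j'} - min ρ_i ρ_{j'}) x_{j'}(t) + ρ_i / 2` by `w_i / ε`
(`slot_bound`), since `i` is processed in at most `p_i` slots. If no active job is denser than `i`,
the discrepancy is `ρ_i / 2 ≤ w_i / ε`. Otherwise `i` is not preemptible, and it was of highest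
density when it was started at some time `s`. Thus every denser active job was released in `(s, t]`,
and the total weight released there is at most `w_i / ε` (`exists_start`); as an unfinished denser
job contributes at most its weight minus `ρ_i`, there is room for the term `ρ_i / 2`.
-/

open Finset
open scoped Classical

noncomputable section

namespace NPSched

/-- The density `ρ_j = w_j / p_j` of job `j`. -/
def den (p : ℕ → ℕ) (w : ℕ → ℝ) (j : ℕ) : ℝ := w j / p j

/-- The density class `⌊ρ_j⌋₂` of job `j`: the largest integer `i` with `2 ^ i ≤ ρ_j`. -/
def cls (p : ℕ → ℕ) (w : ℕ → ℝ) (j : ℕ) : ℤ := Int.log 2 (den p w j)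

/-- Remaining size `p_j(t)` of job `j` at integer time `t` under schedule `sched`,
where `sched t` is the job (if any) processed during the slot `[t, t+1]`. -/
def rem (p : ℕ → ℕ) (sched : ℕ → Option ℕ) (j t : ℕ) : ℕ :=
  p j - ((Finset.range t).filter fun t' => sched t' = some j).card

/-- Remaining weight `w_j(t) = ρ_j · p_j(t)`. -/
def wrem (p : ℕ → ℕ) (w : ℕ → ℝ) (sched : ℕ → Option ℕ) (j t : ℕ) : ℝ :=
  den p w j * rem p sched j t

/-- Fractional weighted flow time `∑_{t ≥ r_j} w_j(t)` of job `j`. -/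
def fracFlow (r p : ℕ → ℕ) (w : ℕ → ℝ) (sched : ℕ → Option ℕ) (j : ℕ) : ℝ :=
  ∑' t : ℕ, if r j ≤ t then wrem p w sched j t else 0

/-- `s` is the first time at which job `j` is ever processed. -/
def isStart (sched : ℕ → Option ℕ) (j s : ℕ) : Prop :=
  sched s = some j ∧ ∀ s' < s, sched s' ≠ some j

/-- Active jobs `A(t)`: released by `t`, not immediately rejected, not yet finished. -/
def activeAt (J : Finset ℕ) (r p : ℕ → ℕ) (sched : ℕ → Option ℕ) (Jimm : Finset ℕ)
    (t : ℕ) : Finset ℕ :=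
  J.filter fun j => r j ≤ t ∧ j ∉ Jimm ∧ 0 < rem p sched j t

/-- The set `A(r_j)` of active jobs present when `j` arrives: jobs released strictly
earlier, or simultaneously but earlier in the fixed (index) order, that are neither
rejected nor finished.  (`j` itself is excluded.) -/
def arrSet (J : Finset ℕ) (r p : ℕ → ℕ) (sched : ℕ → Option ℕ) (Jimm : Finset ℕ)
    (j : ℕ) : Finset ℕ :=
  J.filter fun j' =>
    (r j' < r j ∨ (r j' = r j ∧ j' < j)) ∧ j' ∉ Jimm ∧ 0 < rem p sched j' (r j)

/-- `α_j`: the increase of total fractional weighted flow time caused by the arrival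
of `j`, had HDF been run on `A(r_j) ∪ {j}` from time `r_j` on. -/
def alpha (J : Finset ℕ) (r p : ℕ → ℕ) (w : ℕ → ℝ) (sched : ℕ → Option ℕ)
    (Jimm : Finset ℕ) (j : ℕ) : ℝ :=
  w j * ∑ j' ∈ (arrSet J r p sched Jimm j).filter (fun j' => den p w j ≤ den p w j'),
      (rem p sched j' (r j) : ℝ)
    + w j * p j / 2
    + p j * ∑ j' ∈ (arrSet J r p sched Jimm j).filter (fun j' => den p w j' < den p w j),
        wrem p w sched j' (r j)

/-- `α_j⁺`: the part of (the two sums of) `α_j` coming from jobs of density class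
at least `⌊ρ_j⌋₂`. -/
def alphaPlus (J : Finset ℕ) (r p : ℕ → ℕ) (w : ℕ → ℝ) (sched : ℕ → Option ℕ)
    (Jimm : Finset ℕ) (j : ℕ) : ℝ :=
  w j * ∑ j' ∈ (arrSet J r p sched Jimm j).filter
      (fun j' => cls p w j ≤ cls p w j' ∧ den p w j ≤ den p w j'),
      (rem p sched j' (r j) : ℝ)
    + p j * ∑ j' ∈ (arrSet J r p sched Jimm j).filter
        (fun j' => cls p w j ≤ cls p w j' ∧ den p w j' < den p w j),
        wrem p w sched j' (r j)

/-- `α_j⁻`: the contribution to `α_j` of jobs of density class strictly less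
than `⌊ρ_j⌋₂`. -/
def alphaMinus (J : Finset ℕ) (r p : ℕ → ℕ) (w : ℕ → ℝ) (sched : ℕ → Option ℕ)
    (Jimm : Finset ℕ) (j : ℕ) : ℝ :=
  p j * ∑ j' ∈ (arrSet J r p sched Jimm j).filter (fun j' => cls p w j' < cls p w j),
      wrem p w sched j' (r j)

/-- The set `J⁺` of jobs assigned to table `T⁺`. -/
def Jplus (J : Finset ℕ) (r p : ℕ → ℕ) (w : ℕ → ℝ) (sched : ℕ → Option ℕ)
    (Jimm : Finset ℕ) (ε : ℝ) : Finset ℕ :=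
  J.filter fun j => w j * p j / ε ≤ alphaPlus J r p w sched Jimm j

/-- The set `J⁻` of jobs assigned to table `T⁻`. -/
def Jminus (J : Finset ℕ) (r p : ℕ → ℕ) (w : ℕ → ℝ) (sched : ℕ → Option ℕ)
    (Jimm : Finset ℕ) (ε : ℝ) : Finset ℕ :=
  J.filter fun j => w j * p j / ε < alphaMinus J r p w sched Jimm j

/-- The bucket `(⌊α_j⁺/w_j⌋₂, ⌊w_j⌋₂)` of table `T⁺` to which a job of `J⁺` is assigned. -/
def bucketPlus (J : Finset ℕ) (r p : ℕ → ℕ) (w : ℕ → ℝ) (sched : ℕ → Option ℕ)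
    (Jimm : Finset ℕ) (j : ℕ) : ℤ × ℤ :=
  (Int.log 2 (alphaPlus J r p w sched Jimm j / w j), Int.log 2 (w j))

/-- The bucket `(⌊α_j⁻⌋₂, ⌊ρ_j⌋₂, ⌊p_j⌋₂)` of table `T⁻` to which a job of `J⁻` is assigned. -/
def bucketMinus (J : Finset ℕ) (r p : ℕ → ℕ) (w : ℕ → ℝ) (sched : ℕ → Option ℕ)
    (Jimm : Finset ℕ) (j : ℕ) : ℤ × ℤ × ℤ :=
  (Int.log 2 (alphaMinus J r p w sched Jimm j), cls p w j, Int.log 2 ((p j : ℝ)))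

/-- `j'` arrives no later than `j` (simultaneous arrivals ordered by index). -/
def arrLE (r : ℕ → ℕ) (j' j : ℕ) : Prop :=
  r j' < r j ∨ (r j' = r j ∧ j' ≤ j)

/-- The (1-based) position of `j` in the arrival order of its bucket of `T⁺`. -/
def rankPlus (J : Finset ℕ) (r p : ℕ → ℕ) (w : ℕ → ℝ) (sched : ℕ → Option ℕ)
    (Jimm : Finset ℕ) (ε : ℝ) (j : ℕ) : ℕ :=
  ((Jplus J r p w sched Jimm ε).filter fun j' =>
    bucketPlus J r p w sched Jimm j' = bucketPlus J r p w sched Jimm j ∧ arrLE r j' j).card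

/-- The (1-based) position of `j` in the arrival order of its bucket of `T⁻`. -/
def rankMinus (J : Finset ℕ) (r p : ℕ → ℕ) (w : ℕ → ℝ) (sched : ℕ → Option ℕ)
    (Jimm : Finset ℕ) (ε : ℝ) (j : ℕ) : ℕ :=
  ((Jminus J r p w sched Jimm ε).filter fun j' =>
    bucketMinus J r p w sched Jimm j' = bucketMinus J r p w sched Jimm j ∧ arrLE r j' j).card

/-- An execution of algorithm `A` on a job instance `(J, r, p, w)` with parameter
`ε` (where `k = 1/ε` is a positive integer): the data consists of the schedule
(`sched t` is the job processed in slot `[t, t+1]`), the set `Jimm` of immediately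
rejected jobs, and the growing set `L t` of preemptible jobs; the fields below
axiomatise exactly the rules of algorithm `A`. -/
structure AlgA where
  /-- the (finite) set of jobs -/
  J : Finset ℕ
  /-- release times -/
  r : ℕ → ℕ
  /-- sizes -/
  p : ℕ → ℕ
  /-- weights -/
  w : ℕ → ℝ
  /-- the parameter ε -/
  ε : ℝ
  /-- `k = 1/ε`, a positive integer -/
  k : ℕ
  /-- the schedule produced by algorithm `A` -/
  sched : ℕ → Option ℕ
  /-- the set `J^imm` of immediately rejected jobs -/
  Jimm : Finset ℕ
  /-- `L t` : the set of preemptible jobs at time `t` -/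
  L : ℕ → Finset ℕ
  hp : ∀ j ∈ J, 0 < p j
  hw : ∀ j ∈ J, 0 < w j
  hε : 0 < ε
  hε2 : ε ^ 2 ≤ 1 / 2
  hk : (k : ℝ) = 1 / ε
  /-- immediate rejections: in each bucket of `T⁺` the first job and every
  `(1/ε)`-th job thereafter (positions `1, 1 + k, 1 + 2k, …`), and in each bucket
  of `T⁻` every `(1/ε)`-th job (positions `k, 2k, …`), are rejected on arrival. -/
  hJimm : ∀ j, j ∈ Jimm ↔ j ∈ J ∧
    ((j ∈ Jplus J r p w sched Jimm ε ∧ rankPlus J r p w sched Jimm ε j % k = 1 % k) ∨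
     (j ∈ Jminus J r p w sched Jimm ε ∧ rankMinus J r p w sched Jimm ε j % k = 0))
  hL0 : L 0 = ∅
  /-- a job enters `L` when the weight released since it started processing
  exceeds `w_j / ε`; once in `L` it stays in `L`. -/
  hLsucc : ∀ t j, j ∈ L (t + 1) ↔ j ∈ L t ∨
    (sched t = some j ∧ ∃ s, isStart sched j s ∧
      w j / ε < ∑ j' ∈ J.filter (fun j' => s < r j' ∧ r j' ≤ t + 1), w j')
  /-- only active jobs are processed -/
  hvalid : ∀ t j, sched t = some j → j ∈ activeAt J r p sched Jimm t
  /-- a running job that is unfinished and not preemptible keeps running -/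
  hcont : ∀ t j, sched t = some j → 0 < rem p sched j (t + 1) → j ∉ L (t + 1) →
    sched (t + 1) = some j
  /-- initially, a highest-density active job is processed (if any job is active) -/
  hHDF0 : (activeAt J r p sched Jimm 0 = ∅ ∧ sched 0 = none) ∨
    ∃ j, sched 0 = some j ∧ ∀ j' ∈ activeAt J r p sched Jimm 0, den p w j' ≤ den p w j
  /-- whenever the previous job has finished or become preemptible (or no job was
  running), a highest-density active job is processed (if any job is active) -/
  hHDFsucc : ∀ t, (∀ j, sched t = some j → rem p sched j (t + 1) = 0 ∨ j ∈ L (t + 1)) →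
    (activeAt J r p sched Jimm (t + 1) = ∅ ∧ sched (t + 1) = none) ∨
    ∃ j, sched (t + 1) = some j ∧
      ∀ j' ∈ activeAt J r p sched Jimm (t + 1), den p w j' ≤ den p w j
  /-- every job that is not immediately rejected is eventually finished by `A` -/
  hdone : ∀ j ∈ J, j ∉ Jimm → ∃ T, rem p sched j T = 0



namespace AlgA

/-! ### Remaining sizes -/

/-- Indicator that job `j` is processed in slot `[t, t+1]`. -/
def ind (A : AlgA) (j t : ℕ) : ℝ := if A.sched t = some j then 1 else 0

/-- Remaining size of `j` at time `t`, set to zero before its release. -/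
def sz (A : AlgA) (j t : ℕ) : ℝ := if A.r j ≤ t then (rem A.p A.sched j t : ℝ) else 0

/-- The decrease of `sz j * sz j'` in slot `[t, t+1]`, disregarding arrivals. -/
def drop (A : AlgA) (j j' t : ℕ) : ℝ :=
  A.ind j t * A.sz j' t + A.ind j' t * A.sz j t - A.ind j t * A.ind j' t

/-- The jobs that are not immediately rejected. -/
def kept (A : AlgA) : Finset ℕ := A.J \ A.Jimm

lemma active_of_sched (A : AlgA) {t j : ℕ} (h : A.sched t = some j) :
    j ∈ A.J ∧ A.r j ≤ t ∧ j ∉ A.Jimm ∧ 0 < rem A.p A.sched j t := by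
  have := A.hvalid t j h
  simpa [activeAt] using this

lemma rem_succ (A : AlgA) (j t : ℕ) :
    (rem A.p A.sched j (t + 1) : ℝ) = rem A.p A.sched j t - A.ind j t := by
  unfold ind
  split_ifs with h
  · have h0 := (A.active_of_sched h).2.2.2
    have : rem A.p A.sched j t = rem A.p A.sched j (t + 1) + 1 := by
      unfold rem at h0 ⊢
      rw [Finset.range_add_one, Finset.filter_insert, if_pos h, Finset.card_insert_of_notMem
        (by simp)]
      omega
    rw [this]; push_cast; ring
  · unfold rem
    rw [Finset.range_add_one, Finset.filter_insert, if_neg h, sub_zero]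

lemma rem_le (A : AlgA) (j t : ℕ) : rem A.p A.sched j t ≤ A.p j := Nat.sub_le _ _

lemma rem_anti (A : AlgA) (j : ℕ) : Antitone (rem A.p A.sched j) := by
  intro a b hab
  unfold rem
  have : ((Finset.range a).filter fun t' => A.sched t' = some j) ⊆
      ((Finset.range b).filter fun t' => A.sched t' = some j) :=
    Finset.filter_subset_filter _ (by simpa using hab)
  have := Finset.card_le_card this
  omega

lemma rem_of_le_release (A : AlgA) {j t : ℕ} (h : t ≤ A.r j) : rem A.p A.sched j t = A.p j := by
  unfold rem
  rw [Finset.filter_false_of_mem]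
  · simp
  · intro u hu h'
    have := (A.active_of_sched h').2.1
    simp at hu
    omega

lemma ind_of_lt (A : AlgA) {j t : ℕ} (h : t < A.r j) : A.ind j t = 0 := by
  unfold ind
  rw [if_neg]
  intro h'
  have := (A.active_of_sched h').2.1
  omega

lemma sz_nonneg (A : AlgA) (j t : ℕ) : 0 ≤ A.sz j t := by
  unfold sz; split_ifs <;> positivity

lemma sum_ind_eq (A : AlgA) (j T : ℕ) :
    ∑ t ∈ range T, A.ind j t = A.p j - rem A.p A.sched j T := by
  induction T with
  | zero => simp [A.rem_of_le_release (Nat.zero_le _)]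
  | succ T ih => rw [Finset.sum_range_succ, ih, A.rem_succ]; ring

/-! ### The arrival costs as a sum over slots -/

/-- The product `sz j * sz j'` starts at `p_j · p_{j'}(r_j)` on the arrival of the later job `j`
and changes only by `drop` afterwards. -/
lemma sum_drop (A : AlgA) {j j' : ℕ} (h : A.r j' ≤ A.r j) (T : ℕ) :
    A.sz j T * A.sz j' T + ∑ t ∈ range T, A.drop j j' t =
      if A.r j ≤ T then (A.p j : ℝ) * rem A.p A.sched j' (A.r j) else 0 := by
  induction T with
  | zero =>
    by_cases h0 : A.r j = 0
    · have h0' : A.r j' = 0 := by omega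
      simp [sz, h0, h0', A.rem_of_le_release (Nat.zero_le _)]
    · simp [sz, h0]
  | succ T ih =>
    rw [Finset.sum_range_succ]
    by_cases h1 : A.r j ≤ T
    · rw [if_pos h1] at ih
      rw [if_pos (by omega), ← ih]
      have e : ∀ i, A.r i ≤ T → A.sz i (T + 1) = A.sz i T - A.ind i T := by
        intro i hi
        simp only [sz, if_pos hi, if_pos (Nat.le_succ_of_le hi), A.rem_succ]
      rw [e j h1, e j' (h.trans h1), drop]
      ring
    · rw [if_neg h1] at ih
      have hx : A.sz j T = 0 := by simp [sz, h1]
      rw [hx, zero_mul, zero_add] at ih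
      rw [ih, drop, hx, A.ind_of_lt (by omega)]
      by_cases h2 : A.r j ≤ T + 1
      · have h3 : A.r j = T + 1 := by omega
        have h4 : A.r j' ≤ T + 1 := by omega
        simp [sz, h3, h4, A.rem_of_le_release h3.ge]
      · simp [sz, h2]

/-- Summing a symmetric function over the pairs `j' ≺ j` in arrival order, plus half of the
diagonal, gives half of the sum over all ordered pairs. -/
lemma sum_symm (S : Finset ℕ) (r : ℕ → ℕ) (G : ℕ → ℕ → ℝ) (hG : ∀ i j, G i j = G j i) :
    ∑ j ∈ S, (G j j / 2 + ∑ j' ∈ S, if (r j' < r j ∨ (r j' = r j ∧ j' < j)) then G j j' else 0) =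
      (∑ j ∈ S, ∑ j' ∈ S, G j j') / 2 := by
  have key : ∀ j ∈ S, ∀ j' ∈ S, G j j' =
      (if (r j' < r j ∨ (r j' = r j ∧ j' < j)) then G j j' else 0) +
      (if (r j < r j' ∨ (r j = r j' ∧ j < j')) then G j' j else 0) +
      (if j = j' then G j j else 0) := by
    intro j _ j' _
    rw [hG j' j]
    rcases lt_trichotomy (r j) (r j') with h | h | h
    · have : j ≠ j' := by rintro rfl; omega
      simp [h, this, h.not_gt, h.ne']
    · rcases lt_trichotomy j j' with h' | h' | h'
      · simp [h, h', h'.not_gt, h'.ne]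
      · subst h'; simp
      · simp [h, h', h'.not_gt, h'.ne']
    · have : j ≠ j' := by rintro rfl; omega
      simp [h, this, h.not_gt, h.ne']
  have e : ∑ j ∈ S, ∑ j' ∈ S, G j j' =
      ∑ j ∈ S, ∑ j' ∈ S, ((if (r j' < r j ∨ (r j' = r j ∧ j' < j)) then G j j' else 0) +
      (if (r j < r j' ∨ (r j = r j' ∧ j < j')) then G j' j else 0) +
      (if j = j' then G j j else 0)) :=
    Finset.sum_congr rfl fun j hj => Finset.sum_congr rfl fun j' hj' => key j hj j' hj'
  rw [e]
  simp only [Finset.sum_add_distrib]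
  rw [Finset.sum_comm (f := fun j j' =>
    if (r j < r j' ∨ (r j = r j' ∧ j < j')) then G j' j else 0)]
  have d : ∑ j ∈ S, ∑ j' ∈ S, (if j = j' then G j j else 0) = ∑ j ∈ S, G j j :=
    Finset.sum_congr rfl fun j hj => by simp [hj]
  rw [d, ← Finset.sum_div]
  ring

/-- The two sums in `α_j` differ only in which of the two densities is smaller. Finished jobs
may be included because they contribute zero. -/
lemma alpha_eq (A : AlgA) {j : ℕ} (hj : j ∈ A.kept) :
    alpha A.J A.r A.p A.w A.sched A.Jimm j =
      den A.p A.w j * (A.p j * A.p j) / 2 + ∑ j' ∈ A.kept,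
        if (A.r j' < A.r j ∨ (A.r j' = A.r j ∧ j' < j)) then
          min (den A.p A.w j) (den A.p A.w j') * (A.p j * rem A.p A.sched j' (A.r j)) else 0 := by
  have hp : (A.p j : ℝ) ≠ 0 := by
    have := A.hp j (Finset.mem_sdiff.1 hj).1
    positivity
  have hw : A.w j = den A.p A.w j * A.p j := by unfold den; field_simp
  have e : ∑ j' ∈ A.kept, (if (A.r j' < A.r j ∨ (A.r j' = A.r j ∧ j' < j)) then
          min (den A.p A.w j) (den A.p A.w j') * (A.p j * rem A.p A.sched j' (A.r j)) else 0) =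
      ∑ j' ∈ arrSet A.J A.r A.p A.sched A.Jimm j,
          min (den A.p A.w j) (den A.p A.w j') * (A.p j * rem A.p A.sched j' (A.r j)) := by
    rw [← Finset.sum_filter]
    symm
    apply Finset.sum_subset
    · intro i hi
      simp only [arrSet, kept, Finset.mem_filter, Finset.mem_sdiff] at hi ⊢
      tauto
    · intro i hi hi'
      simp only [arrSet, kept, Finset.mem_filter, Finset.mem_sdiff] at hi hi'
      have : rem A.p A.sched i (A.r j) = 0 := by
        by_contra h
        exact hi' ⟨hi.1.1, hi.2, hi.1.2, Nat.pos_of_ne_zero h⟩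
      simp [this]
  rw [e, alpha, Finset.mul_sum, Finset.mul_sum, Finset.sum_filter, Finset.sum_filter, add_assoc,
    add_left_comm, ← Finset.sum_add_distrib]
  congr 1
  · rw [hw]; ring
  · refine Finset.sum_congr rfl fun i _ => ?_
    by_cases h : den A.p A.w j ≤ den A.p A.w i
    · rw [if_pos h, if_neg (not_lt.2 h), min_eq_left h, hw]; ring
    · rw [if_neg h, if_pos (not_le.1 h), min_eq_right (not_le.1 h).le, wrem]; ring

lemma sum_alpha_eq (A : AlgA) {T : ℕ} (hT : ∀ j ∈ A.kept, A.r j ≤ T ∧ rem A.p A.sched j T = 0) :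
    ∑ j ∈ A.kept, alpha A.J A.r A.p A.w A.sched A.Jimm j =
      ∑ t ∈ range T, ∑ j ∈ A.kept, A.ind j t *
        (∑ j' ∈ A.kept, min (den A.p A.w j) (den A.p A.w j') * A.sz j' t
          - den A.p A.w j / 2) := by
  let D : ℕ → ℕ → ℝ := fun j j' =>
    min (den A.p A.w j) (den A.p A.w j') * ∑ t ∈ range T, A.drop j j' t
  have hD : ∀ i j, D i j = D j i := by
    intro i j
    simp only [D]
    rw [min_comm]
    congr 1
    refine Finset.sum_congr rfl fun t _ => ?_
    unfold drop; ring
  have val : ∀ j ∈ A.kept, ∀ j', A.r j' ≤ A.r j →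
      ∑ t ∈ range T, A.drop j j' t = (A.p j : ℝ) * rem A.p A.sched j' (A.r j) := by
    intro j hj j' h
    have := A.sum_drop h T
    rw [if_pos (hT j hj).1] at this
    rw [← this]
    simp [sz, (hT j hj).2]
  have h1 : ∑ j ∈ A.kept, alpha A.J A.r A.p A.w A.sched A.Jimm j =
      ∑ j ∈ A.kept, (D j j / 2 + ∑ j' ∈ A.kept,
        if (A.r j' < A.r j ∨ (A.r j' = A.r j ∧ j' < j)) then D j j' else 0) := by
    refine Finset.sum_congr rfl fun j hj => ?_
    rw [A.alpha_eq hj]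
    congr 1
    · simp only [D]
      rw [val j hj j le_rfl, min_self, A.rem_of_le_release le_rfl]
    · refine Finset.sum_congr rfl fun j' _ => ?_
      split_ifs with h
      · simp only [D]
        rw [val j hj j' (by omega)]
      · rfl
  rw [h1, sum_symm _ _ _ hD]
  have h2 : ∑ j ∈ A.kept, ∑ j' ∈ A.kept, D j j' = ∑ t ∈ range T, ∑ j ∈ A.kept, ∑ j' ∈ A.kept,
      min (den A.p A.w j) (den A.p A.w j') * A.drop j j' t := by
    simp only [D, Finset.mul_sum]
    rw [Finset.sum_comm' (t' := range T) (s' := fun _ => A.kept)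
      (f := fun j t => ∑ j' ∈ A.kept,
        min (den A.p A.w j) (den A.p A.w j') * A.drop j j' t) (by tauto) |>.symm]
    exact Finset.sum_congr rfl fun j _ => Finset.sum_comm
  rw [h2, Finset.sum_div]
  refine Finset.sum_congr rfl fun t _ => ?_
  have h3 : ∀ j ∈ A.kept, ∀ j' ∈ A.kept,
      min (den A.p A.w j) (den A.p A.w j') * A.drop j j' t =
      A.ind j t * (min (den A.p A.w j) (den A.p A.w j') * A.sz j' t) +
      A.ind j' t * (min (den A.p A.w j') (den A.p A.w j) * A.sz j t) -
      (if j = j' then A.ind j t * den A.p A.w j else 0) := by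
    intro j _ j' _
    rw [min_comm (den A.p A.w j')]
    by_cases h : j = j'
    · subst h
      have : A.ind j t * A.ind j t = A.ind j t := by unfold ind; split_ifs <;> simp
      rw [if_pos rfl, min_self, drop, this]; ring
    · have : A.ind j t * A.ind j' t = 0 := by
        unfold ind
        by_cases h1 : A.sched t = some j
        · have : A.sched t ≠ some j' := by rw [h1]; simpa using h
          simp [this]
        · simp [h1]
      rw [if_neg h, drop, this]; ring
  rw [Finset.sum_congr rfl fun j hj => Finset.sum_congr rfl fun j' hj' => h3 j hj j' hj']
  simp only [Finset.sum_add_distrib, Finset.sum_sub_distrib]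
  rw [Finset.sum_comm (f := fun j j' =>
    A.ind j' t * (min (den A.p A.w j') (den A.p A.w j) * A.sz j t))]
  have d : ∑ j ∈ A.kept, ∑ j' ∈ A.kept, (if j = j' then A.ind j t * den A.p A.w j else 0) =
      ∑ j ∈ A.kept, A.ind j t * den A.p A.w j :=
    Finset.sum_congr rfl fun j hj => by simp [hj]
  rw [d]
  simp only [mul_sub, Finset.sum_sub_distrib, Finset.mul_sum, mul_div_assoc', ← Finset.sum_div]
  ring

/-! ### The cost of a slot -/

lemma eq_none_imp (A : AlgA) {t : ℕ} (h : A.sched t = none) :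
    activeAt A.J A.r A.p A.sched A.Jimm t = ∅ := by
  cases t with
  | zero =>
    rcases A.hHDF0 with h' | ⟨j, hj, _⟩
    · exact h'.1
    · rw [h] at hj; cases hj
  | succ t =>
    have hyp : ∀ j, A.sched t = some j → rem A.p A.sched j (t + 1) = 0 ∨ j ∈ A.L (t + 1) := by
      intro j hj
      by_contra! hc
      have := A.hcont t j hj (Nat.pos_of_ne_zero hc.1) hc.2
      rw [h] at this; cases this
    rcases A.hHDFsucc t hyp with h' | ⟨j, hj, _⟩
    · exact h'.1
    · rw [h] at hj; cases hj

/-- A running job is of highest density among the active jobs, unless it was already running in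
the previous slot and is not preemptible. -/
lemma hdf_or_continued (A : AlgA) {t i : ℕ} (h : A.sched t = some i) :
    (∀ j ∈ activeAt A.J A.r A.p A.sched A.Jimm t, den A.p A.w j ≤ den A.p A.w i) ∨
    ∃ u, t = u + 1 ∧ A.sched u = some i ∧ i ∉ A.L (u + 1) := by
  cases t with
  | zero =>
    rcases A.hHDF0 with h' | ⟨j, hj, hj'⟩
    · rw [h] at h'; cases h'.2
    · rw [h] at hj; cases hj; exact Or.inl hj'
  | succ t =>
    by_cases hyp : ∀ j, A.sched t = some j → rem A.p A.sched j (t + 1) = 0 ∨ j ∈ A.L (t + 1)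
    · rcases A.hHDFsucc t hyp with h' | ⟨j, hj, hj'⟩
      · rw [h] at h'; cases h'.2
      · rw [h] at hj; cases hj; exact Or.inl hj'
    · push Not at hyp
      obtain ⟨j, hj, h1, h2⟩ := hyp
      have := A.hcont t j hj (Nat.pos_of_ne_zero h1) h2
      rw [h] at this; cases this
      exact Or.inr ⟨t, rfl, hj, h2⟩

/-- An active job denser than the running job `i` was released after `i` started, since `i` had
highest density at its start; the weight released since then is at most `w_i / ε`, since `i` is
not preemptible. -/
lemma exists_start (A : AlgA) {t i : ℕ} (h : A.sched t = some i) {j₀ : ℕ}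
    (hj₀ : j₀ ∈ activeAt A.J A.r A.p A.sched A.Jimm t)
    (hd₀ : den A.p A.w i < den A.p A.w j₀) :
    ∃ s, (∀ j ∈ activeAt A.J A.r A.p A.sched A.Jimm t, den A.p A.w i < den A.p A.w j →
        s < A.r j ∧ A.r j ≤ t) ∧
      ∑ j ∈ A.J.filter (fun j => s < A.r j ∧ A.r j ≤ t), A.w j ≤ A.w i / A.ε := by
  have hex : ∃ s, A.sched s = some i := ⟨t, h⟩
  obtain ⟨s, hs, hst⟩ : ∃ s, isStart A.sched i s ∧ s ≤ t :=
    ⟨Nat.find hex, ⟨Nat.find_spec hex, fun s' hs' => Nat.find_min hex hs'⟩, Nat.find_min' hex h⟩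
  refine ⟨s, ?_, ?_⟩
  · intro j hj hd
    simp only [activeAt, Finset.mem_filter] at hj
    refine ⟨?_, hj.2.1⟩
    by_contra! hle
    rcases A.hdf_or_continued hs.1 with h' | ⟨u, rfl, hu, _⟩
    · have := h' j (by
        simp only [activeAt, Finset.mem_filter]
        exact ⟨hj.1, hle, hj.2.2.1, hj.2.2.2.trans_le (A.rem_anti j hst)⟩)
      linarith
    · exact hs.2 u (by omega) hu
  · rcases A.hdf_or_continued h with h' | ⟨u, rfl, hu, hL⟩
    · exact absurd hd₀ (not_lt.2 (h' j₀ hj₀))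
    · by_contra! hlt
      exact hL ((A.hLsucc u i).2 (Or.inr ⟨hu, s, hs, hlt⟩))

lemma one_le_inv_eps (A : AlgA) : 1 ≤ 1 / A.ε := by
  rw [le_div_iff₀ A.hε]
  nlinarith [A.hε, A.hε2]

lemma den_nonneg (A : AlgA) {j : ℕ} (hj : j ∈ A.J) : 0 ≤ den A.p A.w j :=
  div_nonneg (A.hw j hj).le (Nat.cast_nonneg _)

lemma den_mul (A : AlgA) {j : ℕ} (hj : j ∈ A.J) : den A.p A.w j * A.p j = A.w j := by
  have : (A.p j : ℝ) ≠ 0 := by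
    have := A.hp j hj
    positivity
  unfold den; field_simp

lemma den_le_weight (A : AlgA) {j : ℕ} (hj : j ∈ A.J) : den A.p A.w j ≤ A.w j :=
  div_le_self (A.hw j hj).le (by exact_mod_cast A.hp j hj)

/-- In a slot processing `i`, the flow cost exceeds the decrease of the highest-density-first
potential by at most `w_i / ε`. -/
lemma slot_bound (A : AlgA) {t i : ℕ} (h : A.sched t = some i) :
    ∑ j ∈ A.kept, den A.p A.w j * A.sz j t ≤
      ∑ j ∈ A.kept, min (den A.p A.w i) (den A.p A.w j) * A.sz j t - den A.p A.w i / 2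
        + A.w i / A.ε := by
  have hi := (A.active_of_sched h).1
  have hρ := A.den_nonneg hi
  have hρw : den A.p A.w i ≤ A.w i / A.ε := by
    refine (A.den_le_weight hi).trans ?_
    rw [div_eq_mul_one_div]
    exact le_mul_of_one_le_right (A.hw i hi).le A.one_le_inv_eps
  have hact : ∀ j ∈ A.kept, j ∉ activeAt A.J A.r A.p A.sched A.Jimm t → A.sz j t = 0 := by
    intro j hj hn
    simp only [kept, Finset.mem_sdiff] at hj
    unfold sz
    split_ifs with hr
    · simp only [activeAt, Finset.mem_filter] at hn
      have : rem A.p A.sched j t = 0 := by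
        by_contra h0
        exact hn ⟨hj.1, hr, hj.2, Nat.pos_of_ne_zero h0⟩
      simp [this]
    · rfl
  by_cases hden : ∃ j₀ ∈ activeAt A.J A.r A.p A.sched A.Jimm t, den A.p A.w i < den A.p A.w j₀
  · obtain ⟨j₀, hj₀, hd₀⟩ := hden
    obtain ⟨s, hs, hsum⟩ := A.exists_start h hj₀ hd₀
    have hj₀k : j₀ ∈ A.kept := by
      simp only [activeAt, kept, Finset.mem_filter, Finset.mem_sdiff] at hj₀ ⊢
      tauto
    have term : ∀ j ∈ A.kept, den A.p A.w j * A.sz j t ≤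
        min (den A.p A.w i) (den A.p A.w j) * A.sz j t +
        ((if s < A.r j ∧ A.r j ≤ t then A.w j else 0) - if j = j₀ then den A.p A.w i else 0) := by
      intro j hj
      have hjJ := (Finset.mem_sdiff.1 hj).1
      by_cases hc : j ∈ activeAt A.J A.r A.p A.sched A.Jimm t ∧ den A.p A.w i < den A.p A.w j
      · rw [if_pos (hs j hc.1 hc.2), min_eq_left hc.2.le]
        have hr : A.r j ≤ t ∧ 0 < rem A.p A.sched j t := by
          have := hc.1
          simp only [activeAt, Finset.mem_filter] at this
          exact ⟨this.2.1, this.2.2.2⟩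
        have h1 : (1 : ℝ) ≤ A.sz j t := by
          rw [sz, if_pos hr.1]; exact_mod_cast hr.2
        have h2 : A.sz j t ≤ A.p j := by
          rw [sz, if_pos hr.1]; exact_mod_cast A.rem_le j t
        have h3 := mul_le_mul_of_nonneg_left h2 (A.den_nonneg hjJ)
        rw [A.den_mul hjJ] at h3
        have h4 := le_mul_of_one_le_right hρ h1
        have h5 : (if j = j₀ then den A.p A.w i else 0) ≤ den A.p A.w i := by
          split_ifs <;> linarith
        linarith
      · have hne : j ≠ j₀ := by rintro rfl; exact hc ⟨hj₀, hd₀⟩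
        have h0 : den A.p A.w j * A.sz j t = min (den A.p A.w i) (den A.p A.w j) * A.sz j t := by
          by_cases ha : j ∈ activeAt A.J A.r A.p A.sched A.Jimm t
          · rw [min_eq_right (not_lt.1 fun hl => hc ⟨ha, hl⟩)]
          · rw [hact j hj ha]; simp
        have h1 : 0 ≤ (if s < A.r j ∧ A.r j ≤ t then A.w j else 0) := by
          split_ifs
          · exact (A.hw j hjJ).le
          · exact le_rfl
        rw [if_neg hne]
        linarith
    have hle := Finset.sum_le_sum term
    rw [Finset.sum_add_distrib, Finset.sum_sub_distrib, Finset.sum_ite_eq' A.kept j₀,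
      if_pos hj₀k] at hle
    have hsub : ∑ j ∈ A.kept, (if s < A.r j ∧ A.r j ≤ t then A.w j else 0) ≤
        ∑ j ∈ A.J.filter (fun j => s < A.r j ∧ A.r j ≤ t), A.w j := by
      rw [← Finset.sum_filter]
      refine Finset.sum_le_sum_of_subset_of_nonneg
        (Finset.filter_subset_filter _ Finset.sdiff_subset) fun j hj _ => ?_
      exact (A.hw j (Finset.mem_filter.1 hj).1).le
    linarith
  · push Not at hden
    have : ∑ j ∈ A.kept, den A.p A.w j * A.sz j t =
        ∑ j ∈ A.kept, min (den A.p A.w i) (den A.p A.w j) * A.sz j t := by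
      refine Finset.sum_congr rfl fun j hj => ?_
      by_cases ha : j ∈ activeAt A.J A.r A.p A.sched A.Jimm t
      · rw [min_eq_right (hden j ha)]
      · rw [hact j hj ha]; simp
    linarith

/-- The bound of `slot_bound` for an arbitrary slot; an idle slot has no active jobs. -/
lemma slot_bound' (A : AlgA) (t : ℕ) :
    ∑ j ∈ A.kept, den A.p A.w j * A.sz j t ≤
      ∑ i ∈ A.kept, A.ind i t *
        (∑ j ∈ A.kept, min (den A.p A.w i) (den A.p A.w j) * A.sz j t - den A.p A.w i / 2)
      + ∑ i ∈ A.kept, A.ind i t * (A.w i / A.ε) := by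
  rw [← Finset.sum_add_distrib]
  rcases hs : A.sched t with _ | i
  · have he := A.eq_none_imp hs
    have h1 : ∀ i, A.ind i t = 0 := fun i => by simp [ind, hs]
    simp only [h1, zero_mul, add_zero, Finset.sum_const_zero]
    refine (Finset.sum_eq_zero fun j hj => ?_).le
    simp only [kept, Finset.mem_sdiff] at hj
    have hn : j ∉ activeAt A.J A.r A.p A.sched A.Jimm t := by rw [he]; simp
    simp only [activeAt, Finset.mem_filter] at hn
    unfold sz
    split_ifs with hr
    · have : rem A.p A.sched j t = 0 := by
        by_contra h0
        exact hn ⟨hj.1, hr, hj.2, Nat.pos_of_ne_zero h0⟩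
      simp [this]
    · simp
  · have hi : i ∈ A.kept := by
      have := A.active_of_sched hs
      exact Finset.mem_sdiff.2 ⟨this.1, this.2.2.1⟩
    rw [Finset.sum_eq_single_of_mem (f := fun i => A.ind i t *
        (∑ j ∈ A.kept, min (den A.p A.w i) (den A.p A.w j) * A.sz j t - den A.p A.w i / 2)
        + A.ind i t * (A.w i / A.ε)) i hi]
    · have : A.ind i t = 1 := by simp [ind, hs]
      rw [this, one_mul, one_mul]
      exact A.slot_bound hs
    · intro j _ hne
      have : A.ind j t = 0 := by
        unfold ind
        rw [if_neg]
        rw [hs]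
        simpa using hne.symm
      simp [this]

/-! ### Summing over time -/

lemma exists_horizon (A : AlgA) :
    ∃ T, ∀ j ∈ A.kept, A.r j ≤ T ∧ rem A.p A.sched j T = 0 := by
  have : ∀ j, ∃ T, j ∈ A.kept → A.r j ≤ T ∧ rem A.p A.sched j T = 0 := by
    intro j
    by_cases hj : j ∈ A.kept
    · have hj' := Finset.mem_sdiff.1 hj
      obtain ⟨T, hT⟩ := A.hdone j hj'.1 hj'.2
      refine ⟨max (A.r j) T, fun _ => ⟨le_max_left _ _, ?_⟩⟩
      exact Nat.le_zero.1 (hT ▸ A.rem_anti j (le_max_right _ _))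
    · exact ⟨0, fun h => absurd h hj⟩
  choose T hT using this
  refine ⟨A.kept.sup T, fun j hj => ?_⟩
  have hle : T j ≤ A.kept.sup T := Finset.le_sup hj
  exact ⟨(hT j hj).1.trans hle, Nat.le_zero.1 ((hT j hj).2 ▸ A.rem_anti j hle)⟩

lemma fracFlow_eq (A : AlgA) {j T : ℕ} (hT : rem A.p A.sched j T = 0) :
    fracFlow A.r A.p A.w A.sched j = ∑ t ∈ range T, den A.p A.w j * A.sz j t := by
  unfold fracFlow
  rw [tsum_eq_sum (s := range T)]
  · refine Finset.sum_congr rfl fun t _ => ?_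
    unfold sz wrem
    split_ifs <;> simp
  · intro t ht
    have : rem A.p A.sched j t = 0 :=
      Nat.le_zero.1 (hT ▸ A.rem_anti j (by simpa using ht))
    simp [wrem, this]

end AlgA

/-- The total fractional weighted flow-time of algorithm `A`
(summed over all jobs not in `J^imm`) is at most
`∑_{j ∉ J^imm} α_j + (1/ε)·∑_{j ∈ J} w_j·p_j`. -/
theorem fracFlow_le_alpha_sum (A : AlgA) :
    ∑ j ∈ A.J \ A.Jimm, fracFlow A.r A.p A.w A.sched j ≤
      (∑ j ∈ A.J \ A.Jimm, alpha A.J A.r A.p A.w A.sched A.Jimm j) +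
        (1 / A.ε) * ∑ j ∈ A.J, A.w j * A.p j := by
  obtain ⟨T, hT⟩ := A.exists_horizon
  change ∑ j ∈ A.kept, _ ≤ ∑ j ∈ A.kept, _ + _
  have hslots : ∑ t ∈ range T, ∑ i ∈ A.kept, A.ind i t * (A.w i / A.ε) ≤
      (1 / A.ε) * ∑ j ∈ A.J, A.w j * A.p j := by
    rw [Finset.sum_comm, Finset.mul_sum]
    refine le_trans (le_of_eq (Finset.sum_congr rfl fun i hi => ?_))
      (Finset.sum_le_sum_of_subset_of_nonneg Finset.sdiff_subset fun j hj _ => ?_)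
    · rw [← Finset.sum_mul, A.sum_ind_eq, (hT i hi).2]
      push_cast; ring
    · exact mul_nonneg (zero_le_one.trans A.one_le_inv_eps)
        (mul_nonneg (A.hw j hj).le (Nat.cast_nonneg _))
  rw [Finset.sum_congr rfl fun j hj => A.fracFlow_eq (hT j hj).2, Finset.sum_comm,
    A.sum_alpha_eq hT]
  have := Finset.sum_le_sum fun t (_ : t ∈ range T) => A.slot_bound' t
  rw [Finset.sum_add_distrib] at this
  linarith
end NPSched
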